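/- arXiv:1807.02831 — 4 statements merged into one kernel-verified Lean document; each statement's English description precedes it below -/
import Mathlib

section
/- Let X be a real reflexive Banach space and let V : X → X* be an everywhere defined nonlinear operator that is bounded (it maps bounded subsets of X to bounded subsets of X*), pseudomonotone, and strongly coercive, i.e. ⟨V(u), u⟩ / ‖u‖ → +∞ as ‖u‖ → ∞. Then V is surjective: for every u* ∈ X* there exists u ∈ X with V(u) = u*. -/
open Filter Topology

variable {X : Type*} [NormedAddCommGroup X] [NormedSpace ℝ X]

/-- Weak convergence of a sequence in `X`: `f (u n) → f x` for every continuous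
linear functional `f ∈ X*`. -/
def WeakConvergent (u : ℕ → X) (x : X) : Prop :=
  ∀ f : X →L[ℝ] ℝ, Tendsto (fun n => f (u n)) atTop (𝓝 (f x))

/-- Weak convergence of a sequence in the dual `X*` (for `X` reflexive this is
equivalently weak-* convergence, i.e. pointwise convergence on `X`). -/
def WeakConvergentDual (F : ℕ → X →L[ℝ] ℝ) (g : X →L[ℝ] ℝ) : Prop :=
  ∀ x : X, Tendsto (fun n => F n x) atTop (𝓝 (g x))

/-- An operator `V : X → X*` is pseudomonotone if whenever `u n ⇀ u` weakly in `X`,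
`V (u n) ⇀ u*` weakly in `X*` and `limsup ⟨V (u n), u n - u⟩ ≤ 0`, then `u* = V u`
and `⟨V (u n), u n⟩ → ⟨V u, u⟩`. -/
def Pseudomonotone (V : X → X →L[ℝ] ℝ) : Prop :=
  ∀ (u : ℕ → X) (x : X) (g : X →L[ℝ] ℝ),
    WeakConvergent u x →
    WeakConvergentDual (fun n => V (u n)) g →
    Filter.limsup (fun n => V (u n) (u n - x)) atTop ≤ (0 : ℝ) →
    g = V x ∧ Tendsto (fun n => V (u n) (u n)) atTop (𝓝 (V x x))

/-- An operator is bounded if it maps bounded sets to bounded sets. -/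
def BoundedOperator (V : X → X →L[ℝ] ℝ) : Prop :=
  ∀ s : Set X, Bornology.IsBounded s → Bornology.IsBounded (V '' s)

/-- An operator `V : X → X*` is strongly coercive if `⟨V u, u⟩ / ‖u‖ → +∞` as `‖u‖ → ∞`. -/
def StronglyCoercive (V : X → X →L[ℝ] ℝ) : Prop :=
  Tendsto (fun u : X => V u u / ‖u‖) (Filter.comap norm atTop) atTop


theorem aux_detPoly {E : Type*} [NormedAddCommGroup E] [InnerProductSpace ℝ E]
    [FiniteDimensional ℝ E] (B : E →L[ℝ] E) :
    ∃ P : Polynomial ℝ, P.natDegree ≤ Module.finrank ℝ E ∧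
      ∀ t : ℝ, P.eval t = (ContinuousLinearMap.id ℝ E + t • B).det := by
  let b := Module.finBasis ℝ E
  let M := LinearMap.toMatrix b b (B : E →ₗ[ℝ] E)
  refine ⟨Matrix.det ((Polynomial.X : Polynomial ℝ) • M.map Polynomial.C
    + (1 : Matrix _ _ ℝ).map Polynomial.C), ?_, ?_⟩
  · simpa using Polynomial.natDegree_det_X_add_C_le M 1
  · intro t
    rw [ContinuousLinearMap.det, ← LinearMap.det_toMatrix b, ← Polynomial.coe_evalRingHom,
      RingHom.map_det]
    congr 1
    ext i j
    simp [M, LinearMap.toMatrix_apply, Matrix.one_apply, b.repr_self, Finsupp.single_apply]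
    by_cases h : i = j
    · simp [h]; ring
    · simp [h, Ne.symm h, mul_comm]

theorem aux_detPos {E : Type*} [NormedAddCommGroup E] [InnerProductSpace ℝ E]
    [FiniteDimensional ℝ E] (B : E →L[ℝ] E) (t : ℝ) (ht0 : 0 ≤ t) (ht : t * ‖B‖ < 1) :
    0 < (ContinuousLinearMap.id ℝ E + t • B).det := by
  obtain ⟨P, -, hP⟩ := aux_detPoly B
  have hne : ∀ s ∈ Set.Icc (0:ℝ) t, P.eval s ≠ 0 := by
    intro s hs
    rw [hP]
    intro h0
    have hbot := (LinearMap.bot_lt_ker_of_det_eq_zero (f := ((ContinuousLinearMap.id ℝ E + s • B : E →L[ℝ] E) : E →ₗ[ℝ] E)) h0)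
    obtain ⟨v, hv, hv0⟩ := (Submodule.ne_bot_iff _).1 hbot.ne'
    have hv' : v + s • B v = 0 := by simpa using hv
    have h1 : v = - (s • B v) := eq_neg_of_add_eq_zero_left hv'
    have h2 : ‖v‖ ≤ s * (‖B‖ * ‖v‖) := by
      calc ‖v‖ = ‖s • B v‖ := by conv_lhs => rw [h1, norm_neg]
        _ = s * ‖B v‖ := by rw [norm_smul, Real.norm_of_nonneg hs.1]
        _ ≤ _ := mul_le_mul_of_nonneg_left (B.le_opNorm v) hs.1
    have h3 : 0 < ‖v‖ := norm_pos_iff.2 hv0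
    have h4 : s * ‖B‖ ≤ t * ‖B‖ := mul_le_mul_of_nonneg_right hs.2 (norm_nonneg _)
    nlinarith
  rw [← hP]
  by_contra hle
  push Not at hle
  have h00 : P.eval 0 = 1 := by
    rw [hP]; simp [ContinuousLinearMap.det]
  have := intermediate_value_Icc' ht0 (f := fun s => P.eval s) P.continuous.continuousOn
  obtain ⟨s, hs, hs0⟩ := this (show (0:ℝ) ∈ Set.Icc _ _ from ⟨hle, by rw [h00]; norm_num⟩)
  exact hne s hs hs0

open MeasureTheory

theorem aux_cov {E : Type*} [NormedAddCommGroup E] [InnerProductSpace ℝ E]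
    [FiniteDimensional ℝ E] [MeasurableSpace E] [BorelSpace E]
    (g : E → E) (hg : ContDiff ℝ 1 g) (L : NNReal) (hL : LipschitzWith L g) (M : ℝ)
    (hM : ∀ x, M < ‖x‖ → g x = 0) (q : E → ℝ) (t : ℝ) (ht0 : 0 ≤ t) (ht : t * L < 1) :
    ∫ x in Metric.closedBall (0:E) M,
      (ContinuousLinearMap.id ℝ E + t • fderiv ℝ g x).det * q (x + t • g x)
      = ∫ y in Metric.closedBall (0:E) M, q y := by
  have hinj : Function.Injective (fun x => x + t • g x) := by
    intro x y hxy
    have h1 : x - y = t • (g y - g x) := by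
      rw [smul_sub, sub_eq_sub_iff_add_eq_add]
      simpa [add_comm] using hxy
    have h2 : ‖x - y‖ ≤ t * (L * ‖x - y‖) := by
      calc ‖x - y‖ = ‖t • (g y - g x)‖ := by rw [← h1]
        _ = t * ‖g x - g y‖ := by rw [norm_smul, Real.norm_of_nonneg ht0, norm_sub_rev]
        _ ≤ _ := mul_le_mul_of_nonneg_left (hL.norm_sub_le x y) ht0
    by_contra hne
    have h3 : 0 < ‖x - y‖ := norm_pos_iff.2 (sub_ne_zero.2 hne)
    nlinarith
  have hsurj : Function.Surjective (fun x => x + t • g x) := by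
    intro y
    have hc : ContractingWith (t.toNNReal * L) (fun x => y - t • g x) := by
      refine ⟨by rw [← NNReal.coe_lt_coe]; push_cast; rwa [Real.coe_toNNReal t ht0], ?_⟩
      refine LipschitzWith.of_dist_le_mul fun a b => ?_
      rw [dist_sub_left, dist_smul₀, Real.norm_of_nonneg ht0]
      have := mul_le_mul_of_nonneg_left (hL.dist_le_mul a b) ht0
      push_cast
      rw [Real.coe_toNNReal t ht0, mul_assoc]; exact this
    refine ⟨hc.fixedPoint, ?_⟩
    have := hc.fixedPoint_isFixedPt
    have h2 : y - t • g hc.fixedPoint = hc.fixedPoint := this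
    simp only
    nth_rw 1 [← h2]
    simp
  have himg : (fun x => x + t • g x) '' Metric.closedBall (0:E) M = Metric.closedBall (0:E) M := by
    apply Set.Subset.antisymm
    · rintro _ ⟨x, hx, rfl⟩
      by_contra hy
      simp only [Metric.mem_closedBall, dist_zero_right, not_le] at hy hx
      have h1 : (fun x => x + t • g x) (x + t • g x) = (fun x => x + t • g x) x := by
        simp [hM _ hy]
      have := hinj h1
      rw [this] at hy
      linarith
    · intro y hy
      obtain ⟨x, hx⟩ := hsurj y
      refine ⟨x, ?_, hx⟩
      by_contra hx'
      simp only [Metric.mem_closedBall, dist_zero_right, not_le] at hx' hy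
      simp only [hM _ hx', smul_zero, add_zero] at hx
      rw [hx] at hx'
      linarith
  have hd : ∀ x, HasFDerivAt (fun x => x + t • g x)
      (ContinuousLinearMap.id ℝ E + t • fderiv ℝ g x) x := by
    intro x
    have := (hg.differentiable one_ne_zero x).hasFDerivAt
    exact (hasFDerivAt_id x).add (this.const_smul t)
  have := integral_image_eq_integral_abs_det_fderiv_smul volume
    (Metric.isClosed_closedBall (x := (0:E)) (ε := M)).measurableSet
    (fun x _ => (hd x).hasFDerivWithinAt) hinj.injOn q
  rw [himg] at this
  rw [this]
  refine integral_congr_ae (Eventually.of_forall fun x => ?_)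
  simp only [smul_eq_mul]
  rw [abs_of_pos]
  refine aux_detPos _ _ ht0 (lt_of_le_of_lt ?_ ht)
  exact mul_le_mul_of_nonneg_left (norm_fderiv_le_of_lipschitz ℝ hL) ht0

theorem aux_cov_one {E : Type*} [NormedAddCommGroup E] [InnerProductSpace ℝ E]
    [FiniteDimensional ℝ E] [MeasurableSpace E] [BorelSpace E]
    (g : E → E) (hg : ContDiff ℝ 1 g) (L : NNReal) (hL : LipschitzWith L g) (M : ℝ)
    (hM : ∀ x, M < ‖x‖ → g x = 0) (c : ℝ) (N : ℕ) :
    ∫ x in Metric.closedBall (0:E) M,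
      (ContinuousLinearMap.id ℝ E + fderiv ℝ g x).det * (1 - c * ‖x + g x‖ ^ 2) ^ N
      = ∫ y in Metric.closedBall (0:E) M, (1 - c * ‖y‖ ^ 2) ^ N := by
  let d := Module.finrank ℝ E + N * 2
  let s := Finset.range (d + 1)
  let v : ℕ → ℝ := fun i => (i : ℝ) / ((d + 1) * (L + 1))
  have hpos : (0:ℝ) < (d + 1) * (L + 1) := by positivity
  have hv : Set.InjOn v s := by
    intro i _ j _ hij
    simp only [v] at hij
    field_simp at hij
    exact_mod_cast hij
  have hv0 : ∀ i, 0 ≤ v i := fun i => by positivity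
  have hvL : ∀ i ∈ s, v i * L < 1 := by
    intro i hi
    have : (i:ℝ) < d + 1 := by exact_mod_cast Finset.mem_range.1 hi
    simp only [v]
    rw [div_mul_eq_mul_div, div_lt_one hpos]
    have hL0 : (0:ℝ) ≤ L := L.2
    have hi0 : (0:ℝ) ≤ i := by positivity
    nlinarith
  let F : ℝ → E → ℝ := fun t x =>
    (ContinuousLinearMap.id ℝ E + t • fderiv ℝ g x).det * (1 - c * ‖x + t • g x‖ ^ 2) ^ N
  let w : ℕ → ℝ := fun i => (Lagrange.basis s v i).eval 1
  have hw : ∑ i ∈ s, w i = 1 := by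
    have := congrArg (Polynomial.eval 1) (Lagrange.sum_basis hv ⟨0, by simp [s]⟩)
    simpa [Polynomial.eval_finsetSum, w] using this
  have hpoly : ∀ x, F 1 x = ∑ i ∈ s, w i * F (v i) x := by
    intro x
    obtain ⟨P, hPd, hP⟩ := aux_detPoly (fderiv ℝ g x)
    let Q : Polynomial ℝ := P * (1 - Polynomial.C c * (Polynomial.C (‖x‖^2) + Polynomial.C (2 * inner ℝ x (g x)) * Polynomial.X + Polynomial.C (‖g x‖^2) * Polynomial.X ^ 2)) ^ N
    have hQ : ∀ t, Q.eval t = F t x := by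
      intro t
      simp only [Q, F, Polynomial.eval_mul, hP, Polynomial.eval_pow]
      congr 2
      rw [norm_add_sq_real, norm_smul, inner_smul_right, mul_pow]
      simp only [Polynomial.eval_sub, Polynomial.eval_one, Polynomial.eval_mul, Polynomial.eval_C,
        Polynomial.eval_add, Polynomial.eval_X, Polynomial.eval_pow, Real.norm_eq_abs, sq_abs]
      ring
    have hQd : Q.degree < (s.card : ℕ) := by
      have h1 : Q.natDegree ≤ d := by
        refine Polynomial.natDegree_mul_le.trans (add_le_add hPd ?_)
        refine Polynomial.natDegree_pow_le.trans (Nat.mul_le_mul_left _ ?_)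
        compute_degree
      rw [Finset.card_range]
      exact lt_of_le_of_lt Polynomial.degree_le_natDegree (by exact_mod_cast Nat.lt_succ_of_le h1)
    have h2 := congrArg (Polynomial.eval 1) (Lagrange.eq_interpolate hv hQd)
    rw [hQ, Lagrange.interpolate_apply, Polynomial.eval_finsetSum] at h2
    rw [h2]
    refine Finset.sum_congr rfl fun i _ => ?_
    simp [hQ, w, mul_comm]
  have hcont : ∀ t, Continuous (F t) := by
    intro t
    have h1 := hg.continuous
    have h2 : Continuous (fderiv ℝ g) := hg.continuous_fderiv one_ne_zero
    have h3 : Continuous fun x => (ContinuousLinearMap.id ℝ E + t • fderiv ℝ g x).det :=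
      ContinuousLinearMap.continuous_det.comp (by fun_prop)
    simp only [F]
    fun_prop
  have hint : ∀ t, IntegrableOn (F t) (Metric.closedBall (0:E) M) := fun t =>
    (hcont t).continuousOn.integrableOn_compact (isCompact_closedBall _ _)
  have hmain : ∫ x in Metric.closedBall (0:E) M, F 1 x
      = ∫ y in Metric.closedBall (0:E) M, (1 - c * ‖y‖ ^ 2) ^ N := by
    simp_rw [hpoly]
    rw [integral_finsetSum _ (fun i _ => (hint (v i)).const_mul _)]
    simp_rw [integral_const_mul]
    rw [Finset.sum_congr rfl fun i hi => by
      rw [show ∫ x in Metric.closedBall (0:E) M, F (v i) x = _ from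
        aux_cov g hg L hL M hM (fun y => (1 - c * ‖y‖ ^ 2) ^ N) (v i) (hv0 i) (hvL i hi)]]
    rw [← Finset.sum_mul, hw, one_mul]
  simpa [F] using hmain

theorem aux_int {E : Type*} [NormedAddCommGroup E] [InnerProductSpace ℝ E]
    [FiniteDimensional ℝ E] [MeasurableSpace E] [BorelSpace E] {f : E → ℝ} (hf : Continuous f)
    {K : Set E} (hK : IsCompact K) : IntegrableOn f K :=
  hf.continuousOn.integrableOn_compact hK

theorem aux_zero {E : Type*} [NormedAddCommGroup E] [InnerProductSpace ℝ E]
    [FiniteDimensional ℝ E] [MeasurableSpace E] [BorelSpace E]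
    (g : E → E) (hg : ContDiff ℝ 1 g) (hc : HasCompactSupport g) :
    ∃ x, x + g x = 0 := by
  by_contra hno
  push Not at hno
  obtain ⟨L, hL⟩ := hg.lipschitzWith_of_hasCompactSupport hc one_ne_zero
  obtain ⟨M0, hM0⟩ := hc.isCompact.isBounded.exists_norm_le
  let M := max M0 1
  have hMpos : 0 < M := lt_of_lt_of_le one_pos (le_max_right _ _)
  have hM : ∀ x, M < ‖x‖ → g x = 0 := by
    intro x hx
    by_contra h
    have := hM0 x (subset_tsupport _ h)
    exact absurd hx (not_lt.2 (this.trans (le_max_left _ _)))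
  have hcH : Continuous fun x => ‖x + g x‖ := (continuous_id.add hg.continuous).norm
  have hK : IsCompact (Metric.closedBall (0:E) M) := isCompact_closedBall _ _
  have hKne : (Metric.closedBall (0:E) M).Nonempty := ⟨0, by simp [hMpos.le]⟩
  obtain ⟨x0, -, hx0⟩ := hK.exists_isMinOn hKne hcH.continuousOn
  obtain ⟨x1, -, hx1⟩ := hK.exists_isMaxOn hKne hcH.continuousOn
  let δ := min ‖x0 + g x0‖ M
  have hδ : 0 < δ := lt_min (norm_pos_iff.2 (hno x0)) hMpos
  let R := max ‖x1 + g x1‖ M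
  have hδR : δ ≤ R := (min_le_right _ _).trans (le_max_right _ _)
  have hR : 0 < R := lt_of_lt_of_le hδ hδR
  let c := (R ^ 2)⁻¹
  have hcpos : 0 < c := by positivity
  have hcR : c * R ^ 2 = 1 := inv_mul_cancel₀ (by positivity)
  let a := 1 - c * δ ^ 2
  let b := 1 - c * (δ / 2) ^ 2
  have ha : 0 ≤ a := by
    have : c * δ ^ 2 ≤ c * R ^ 2 := by gcongr
    simp only [a]; linarith
  have hab : a < b := by
    have : c * (δ/2) ^ 2 < c * δ ^ 2 := by gcongr; linarith
    simp only [a, b]; linarith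
  have hb : 0 < b := ha.trans_lt hab
  let D : E → ℝ := fun x => (ContinuousLinearMap.id ℝ E + fderiv ℝ g x).det
  have hD : Continuous D := by
    have h2 : Continuous (fderiv ℝ g) := hg.continuous_fderiv one_ne_zero
    exact ContinuousLinearMap.continuous_det.comp (by fun_prop)
  let C := ∫ x in Metric.closedBall (0:E) M, |D x|
  let vol := volume.real (Metric.closedBall (0:E) (δ/2))
  have hvol : 0 < vol := by
    refine ENNReal.toReal_pos ?_ ?_
    · exact (Metric.measure_closedBall_pos _ _ (by positivity)).ne'
    · exact (isCompact_closedBall _ _).measure_lt_top.ne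
  have key : ∀ N : ℕ, vol * b ^ N ≤ C * a ^ N := by
    intro N
    have h := aux_cov_one g hg L hL M hM c N
    have h1 : ∫ x in Metric.closedBall (0:E) M,
      (ContinuousLinearMap.id ℝ E + fderiv ℝ g x).det * (1 - c * ‖x + g x‖ ^ 2) ^ N ≤ C * a ^ N := by
      rw [← integral_mul_const]
      refine setIntegral_mono_on ?_ ?_ hK.isClosed.measurableSet ?_
      · refine aux_int ?_ hK
        exact hD.mul (by fun_prop)
      · exact aux_int (by fun_prop) hK
      · intro x hx
        have e1 : δ ≤ ‖x + g x‖ := (min_le_left _ _).trans (hx0 hx)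
        have e2 : ‖x + g x‖ ≤ R := le_trans (hx1 hx) (le_max_left _ _)
        have e3 : 0 ≤ 1 - c * ‖x + g x‖ ^ 2 := by
          have : c * ‖x + g x‖ ^ 2 ≤ c * R ^ 2 := by gcongr
          linarith
        have e4 : 1 - c * ‖x + g x‖ ^ 2 ≤ a := by
          have : c * δ ^ 2 ≤ c * ‖x + g x‖ ^ 2 := by gcongr
          simp only [a]; linarith
        exact mul_le_mul (le_abs_self _) (pow_le_pow_left₀ e3 e4 N) (pow_nonneg e3 N) (abs_nonneg _)
    have hint : IntegrableOn (fun y : E => (1 - c * ‖y‖ ^ 2) ^ N) (Metric.closedBall (0:E) M) :=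
      aux_int (by fun_prop) hK
    have hsub : Metric.closedBall (0:E) (δ/2) ⊆ Metric.closedBall (0:E) M :=
      Metric.closedBall_subset_closedBall (by linarith [min_le_right ‖x0 + g x0‖ M])
    have h2 : vol * b ^ N ≤ ∫ y in Metric.closedBall (0:E) M, (1 - c * ‖y‖ ^ 2) ^ N := by
      calc vol * b ^ N = ∫ y in Metric.closedBall (0:E) (δ/2), b ^ N := by
            simp [vol]
        _ ≤ ∫ y in Metric.closedBall (0:E) (δ/2), (1 - c * ‖y‖ ^ 2) ^ N := by
            refine setIntegral_mono_on ?_ (hint.mono_set hsub) Metric.isClosed_closedBall.measurableSet ?_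
            · exact aux_int (by fun_prop) (isCompact_closedBall _ _)
            · intro y hy
              have hy' : ‖y‖ ≤ δ/2 := by simpa using hy
              refine pow_le_pow_left₀ hb.le ?_ N
              have : c * ‖y‖ ^ 2 ≤ c * (δ/2) ^ 2 := by gcongr
              simp only [b]; linarith
        _ ≤ _ := by
            refine setIntegral_mono_set hint ?_ hsub.eventuallyLE
            refine (ae_restrict_iff' hK.isClosed.measurableSet).2 (Eventually.of_forall fun y hy => ?_)
            have hy' : ‖y‖ ≤ R := le_trans (by simpa using hy) (le_max_right _ _)
            have : c * ‖y‖ ^ 2 ≤ c * R ^ 2 := by gcongr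
            exact pow_nonneg (by linarith) N
    exact h2.trans (h.symm.le.trans h1)
  have hlim : Tendsto (fun N : ℕ => C * (a / b) ^ N) atTop (𝓝 (C * 0)) :=
    (tendsto_pow_atTop_nhds_zero_of_lt_one (by positivity) ((div_lt_one hb).2 hab)).const_mul C
  have hge : vol ≤ C * 0 := by
    refine ge_of_tendsto' hlim fun N => ?_
    rw [div_pow, ← mul_div_assoc, le_div_iff₀ (by positivity)]
    exact key N
  linarith

open scoped ContDiff Manifold in
theorem aux_coercive_zero {E : Type*} [NormedAddCommGroup E] [InnerProductSpace ℝ E]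
    [FiniteDimensional ℝ E] [MeasurableSpace E] [BorelSpace E]
    (T : E → E) (hT : Continuous T) (R : ℝ) (hR : 0 < R)
    (hpos : ∀ x, R ≤ ‖x‖ → 0 < inner ℝ (T x) x) : ∃ x, T x = 0 := by
  by_contra hno
  push Not at hno
  let t : E → Set E := fun x => {v | 0 < inner ℝ v (T x) ∧ (R ≤ ‖x‖ → 0 < inner ℝ v x)}
  have hconv : ∀ x, Convex ℝ (t x) := by
    intro x
    intro v hv w hw a b ha hb hab
    have aux : ∀ p q : ℝ, 0 < p → 0 < q → 0 < a * p + b * q := by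
      intro p q hp hq
      rcases ha.eq_or_lt with h | h
      · have : b = 1 := by linarith
        subst this; nlinarith
      · have : 0 ≤ b * q := by positivity
        have : 0 < a * p := by positivity
        linarith
    refine ⟨?_, fun h => ?_⟩
    · rw [inner_add_left, real_inner_smul_left, real_inner_smul_left]
      exact aux _ _ hv.1 hw.1
    · rw [inner_add_left, real_inner_smul_left, real_inner_smul_left]
      exact aux _ _ (hv.2 h) (hw.2 h)
  have hloc : ∀ x : E, ∃ c : E, ∀ᶠ y in 𝓝 x, c ∈ t y := by
    intro x
    refine ⟨T x, ?_⟩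
    have h1 : ∀ᶠ y in 𝓝 x, 0 < inner ℝ (T x) (T y) := by
      have hc : Continuous fun y => inner ℝ (T x) (T y) := by fun_prop
      refine hc.continuousAt.eventually_const_lt ?_
      beta_reduce; rw [real_inner_self_eq_norm_sq]
      exact pow_pos (norm_pos_iff.2 (hno x)) 2
    have h2 : ∀ᶠ y in 𝓝 x, (R ≤ ‖y‖ → 0 < inner ℝ (T x) y) := by
      rcases lt_or_ge ‖x‖ R with h | h
      · have := (continuous_norm (E := E)).continuousAt.eventually_lt_const h
        filter_upwards [this] with y hy hy'
        linarith
      · have hc : Continuous fun y => inner ℝ (T x) y := by fun_prop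
        have := hc.continuousAt.eventually_const_lt (hpos x h)
        filter_upwards [this] with y hy _ using hy
    filter_upwards [h1, h2] with y hy1 hy2 using ⟨hy1, hy2⟩
  obtain ⟨S, hS⟩ := exists_contMDiffMap_forall_mem_convex_of_local_const (n := 1) 𝓘(ℝ, E) hconv hloc
  have hSd : ContDiff ℝ 1 S := S.contMDiff.contDiff
  let χ : ContDiffBump (0 : E) := ⟨R, 2 * R, hR, by linarith⟩
  let g : E → E := fun x => χ x • (S x - x)
  have hgd : ContDiff ℝ 1 g := χ.contDiff.smul (hSd.sub contDiff_id)
  have hgc : HasCompactSupport g := χ.hasCompactSupport.smul_right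
  obtain ⟨x, hx⟩ := aux_zero g hgd hgc
  have hSx : S x ≠ 0 := by
    intro h
    have := (hS x).1
    rw [h] at this
    simp at this
  rcases le_or_gt ‖x‖ R with h | h
  · have : χ x = 1 := χ.one_of_mem_closedBall (by simpa using h)
    simp [g, this] at hx
    exact hSx hx
  · have h1 := (hS x).2 h.le
    have h2 : inner ℝ (x + g x) x = (1 - χ x) * ‖x‖ ^ 2 + χ x * inner ℝ (S x) x := by
      simp only [g, inner_add_left, real_inner_smul_left, inner_sub_left, real_inner_self_eq_norm_sq]
      ring
    rw [hx, inner_zero_left] at h2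
    have h3 : 0 ≤ χ x := χ.nonneg
    have h4 : χ x ≤ 1 := χ.le_one
    have h5 : 0 < ‖x‖ ^ 2 := by have := hR.trans h; positivity
    rcases h3.eq_or_lt with h6 | h6
    · rw [← h6] at h2; linarith
    · have := mul_pos h6 h1
      have : 0 ≤ (1 - χ x) * ‖x‖ ^ 2 := mul_nonneg (by linarith) h5.le
      linarith

/-- Finite-dimensional Galerkin solutions. -/
theorem aux_galerkin {X : Type*} [NormedAddCommGroup X] [NormedSpace ℝ X]
    (V : X → X →L[ℝ] ℝ) (hV : ∀ w, Continuous fun u => V u w) (R : ℝ) (hR : 0 < R)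
    (f : X →L[ℝ] ℝ) (hpos : ∀ u, R ≤ ‖u‖ → 0 < V u u - f u)
    (F : Submodule ℝ X) [FiniteDimensional ℝ F] :
    ∃ u ∈ F, ‖u‖ ≤ R ∧ ∀ w ∈ F, V u w = f w := by
  let e := toEuclidean (E := F)
  let ι : EuclideanSpace ℝ (Fin (Module.finrank ℝ F)) →L[ℝ] X :=
    F.subtypeL.comp (e.symm : _ →L[ℝ] F)
  let T : EuclideanSpace ℝ (Fin (Module.finrank ℝ F)) → EuclideanSpace ℝ (Fin (Module.finrank ℝ F)) :=
    fun x => (InnerProductSpace.toDual ℝ _).symm ((V (ι x) - f).comp ι)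
  have hTi : ∀ x y, inner ℝ (T x) y = V (ι x) (ι y) - f (ι y) := by
    intro x y
    simp only [T]
    rw [InnerProductSpace.toDual_symm_apply]
    simp
  have hTc : Continuous T := by
    have : Continuous fun x => WithLp.ofLp (T x) := by
      refine continuous_pi fun i => ?_
      have h : ∀ x, T x i = V (ι x) (ι (EuclideanSpace.single i 1)) - f (ι (EuclideanSpace.single i 1)) := by
        intro x
        rw [← hTi, EuclideanSpace.inner_single_right]
        simp
      simp_rw [h]
      exact ((hV _).comp ι.continuous).sub continuous_const
    exact (PiLp.continuous_toLp 2 _).comp this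
  obtain ⟨C, hC⟩ : ∃ C : ℝ, 0 < C ∧ ∀ x, ‖x‖ ≤ C * ‖ι x‖ := by
    refine ⟨‖(e : F →L[ℝ] EuclideanSpace ℝ (Fin (Module.finrank ℝ F)))‖ + 1, by positivity, fun x => ?_⟩
    have h1 : ‖e (e.symm x)‖ ≤ ‖(e : F →L[ℝ] EuclideanSpace ℝ (Fin (Module.finrank ℝ F)))‖ * ‖e.symm x‖ :=
      (e : F →L[ℝ] EuclideanSpace ℝ (Fin (Module.finrank ℝ F))).le_opNorm _
    rw [e.apply_symm_apply] at h1
    have h2 : ‖ι x‖ = ‖e.symm x‖ := rfl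
    rw [h2]
    nlinarith [norm_nonneg (e.symm x)]
  obtain ⟨x, hx⟩ := aux_coercive_zero T hTc (C * R) (mul_pos hC.1 hR) (by
    intro x hx
    rw [hTi]
    apply hpos
    exact le_of_mul_le_mul_left (hx.trans (hC.2 x)) hC.1)
  have hz : ∀ y, V (ι x) (ι y) - f (ι y) = 0 := by
    intro y; rw [← hTi, hx, inner_zero_left]
  refine ⟨ι x, (e.symm x).2, ?_, ?_⟩
  · by_contra h
    push Not at h
    have := hpos _ h.le
    rw [hz] at this
    exact lt_irrefl _ this
  · intro w hw
    have := hz (e ⟨w, hw⟩)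
    have h2 : ι (e ⟨w, hw⟩) = w := by simp [ι]
    rw [h2] at this
    linarith

/-- Ultrafilter form of weak compactness of bounded sets. -/
def AuxWC (E : Type*) [NormedAddCommGroup E] [NormedSpace ℝ E] : Prop :=
  ∀ (U : Ultrafilter E) (C : ℝ), (∀ᶠ x in (U : Filter E), ‖x‖ ≤ C) →
    ∃ z : E, ∀ φ : E →L[ℝ] ℝ, Tendsto φ U (𝓝 (φ z))

theorem aux_ultra_functional {E : Type*} [NormedAddCommGroup E] [NormedSpace ℝ E]
    (U : Ultrafilter E) (C : ℝ) (hC : ∀ᶠ x in (U : Filter E), ‖x‖ ≤ C) :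
    ∃ Λ : (E →L[ℝ] ℝ) →L[ℝ] ℝ, ∀ φ : E →L[ℝ] ℝ, Tendsto φ U (𝓝 (Λ φ)) := by
  have h1 : ∀ φ : E →L[ℝ] ℝ, ∀ᶠ x in (U : Filter E), ‖φ x‖ ≤ C * ‖φ‖ := by
    intro φ
    filter_upwards [hC] with x hx
    refine (φ.le_opNorm x).trans ?_
    rw [mul_comm]
    exact mul_le_mul_of_nonneg_right hx (norm_nonneg _)
  have h2 : ∀ φ : E →L[ℝ] ℝ, ∃ l : ℝ, Tendsto φ U (𝓝 l) := by
    intro φ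
    obtain ⟨l, -, hl⟩ := (isCompact_closedBall (0:ℝ) (C * ‖φ‖)).ultrafilter_le_nhds (U.map φ) (by
      rw [Ultrafilter.coe_map, Filter.le_principal_iff, Filter.mem_map]
      filter_upwards [h1 φ] with x hx
      simpa using hx)
    exact ⟨l, hl⟩
  choose l hl using h2
  refine ⟨LinearMap.mkContinuous ⟨⟨l, ?_⟩, ?_⟩ C ?_, fun φ => hl φ⟩
  · intro φ ψ
    exact tendsto_nhds_unique (hl _) ((hl φ).add (hl ψ))
  · intro c φ
    exact tendsto_nhds_unique (hl _) ((hl φ).const_mul c)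
  · intro φ
    exact le_of_tendsto (hl φ).norm (h1 φ)

theorem aux_wc_prod {X : Type*} [NormedAddCommGroup X] [NormedSpace ℝ X]
    (hrefl : Function.Surjective (NormedSpace.inclusionInDoubleDual ℝ X)) :
    AuxWC (X × (X →L[ℝ] ℝ)) := by
  intro U C hC
  obtain ⟨Λ₁, h₁⟩ := aux_ultra_functional (U.map Prod.fst) C (by
    rw [Ultrafilter.coe_map, Filter.eventually_map]
    filter_upwards [hC] with p hp using (norm_fst_le p).trans hp)
  obtain ⟨Λ₂, h₂⟩ := aux_ultra_functional (U.map Prod.snd) C (by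
    rw [Ultrafilter.coe_map, Filter.eventually_map]
    filter_upwards [hC] with p hp using (norm_snd_le p).trans hp)
  obtain ⟨x, rfl⟩ := hrefl Λ₁
  refine ⟨(x, Λ₂.comp (NormedSpace.inclusionInDoubleDual ℝ X)), fun φ => ?_⟩
  obtain ⟨y, hy⟩ := hrefl (φ.comp (ContinuousLinearMap.inr ℝ X (X →L[ℝ] ℝ)))
  have hy' : ∀ h : X →L[ℝ] ℝ, φ (0, h) = h y := by
    intro h
    have := DFunLike.congr_fun hy h
    simpa [NormedSpace.dual_def] using this.symm
  have hdec : ∀ p : X × (X →L[ℝ] ℝ), φ p = φ.comp (ContinuousLinearMap.inl ℝ X (X →L[ℝ] ℝ)) p.1 + p.2 y := by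
    intro p
    rw [← hy']
    simp [← map_add]
  have e1 : Tendsto (fun p : X × (X →L[ℝ] ℝ) => φ.comp (ContinuousLinearMap.inl ℝ X (X →L[ℝ] ℝ)) p.1) U
      (𝓝 (φ.comp (ContinuousLinearMap.inl ℝ X (X →L[ℝ] ℝ)) x)) := by
    have := h₁ (φ.comp (ContinuousLinearMap.inl ℝ X (X →L[ℝ] ℝ)))
    rw [Ultrafilter.coe_map, tendsto_map'_iff] at this
    exact this
  have e2 : Tendsto (fun p : X × (X →L[ℝ] ℝ) => p.2 y) U
      (𝓝 (Λ₂ (NormedSpace.inclusionInDoubleDual ℝ X y))) := by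
    have := h₂ (NormedSpace.inclusionInDoubleDual ℝ X y)
    rw [Ultrafilter.coe_map, tendsto_map'_iff] at this
    exact this
  have := e1.add e2
  rw [hdec]
  exact this.congr fun p => (hdec p).symm

theorem aux_norming {E : Type*} [NormedAddCommGroup E] [NormedSpace ℝ E] (S : Finset E) :
    ∃ Φ : Finset (E →L[ℝ] ℝ), ∀ x ∈ Submodule.span ℝ (S : Set E), ∃ φ ∈ Φ,
      ‖φ‖ ≤ 1 ∧ ‖x‖ ≤ 2 * |φ x| := by
  classical
  let F := Submodule.span ℝ (S : Set E)
  have : FiniteDimensional ℝ F := FiniteDimensional.span_finset ℝ S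
  choose ψ hψ1 hψ2 using fun x : F => exists_dual_vector'' ℝ (x : E)
  have hcomp : IsCompact (Metric.sphere (0 : F) 1) := isCompact_sphere _ _
  obtain ⟨t, -, ht⟩ := hcomp.elim_nhds_subcover (fun x => {y : F | 1 / 2 < ψ x y}) (by
    intro x hx
    have hc : Continuous fun y : F => ψ x y := by fun_prop
    refine hc.continuousAt.eventually_const_lt ?_
    have : ‖(x:E)‖ = 1 := by simpa using hx
    have h2 := hψ2 x
    rw [this] at h2
    simp at h2
    show 1 / 2 < ψ x (x : E)
    rw [h2]; norm_num)
  refine ⟨insert 0 (t.image ψ), fun x hx => ?_⟩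
  by_cases hx0 : x = 0
  · exact ⟨0, by simp, by simp, by simp [hx0]⟩
  have hn : 0 < ‖x‖ := norm_pos_iff.2 hx0
  let y : F := (‖x‖)⁻¹ • ⟨x, hx⟩
  have hy : y ∈ Metric.sphere (0 : F) 1 := by
    simp [y, norm_smul, hn.ne']
  obtain ⟨z, hz, hzy⟩ := Set.mem_iUnion₂.1 (ht hy)
  refine ⟨ψ z, Finset.mem_insert_of_mem (Finset.mem_image_of_mem ψ hz), hψ1 z, ?_⟩
  have h3 : 1 / 2 < ‖x‖⁻¹ * ψ z x := by simpa [y] using hzy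
  rw [inv_mul_eq_div, lt_div_iff₀ hn] at h3
  linarith [le_abs_self (ψ z x)]

theorem aux_kaplansky {E : Type*} [NormedAddCommGroup E] [NormedSpace ℝ E] (hE : AuxWC E)
    (C : ℝ) (A : ℕ → Set E) (hA : ∀ k, ∀ a ∈ A k, ‖a‖ ≤ C) (u : E)
    (hu : ∀ k, ∀ Φ : Finset (E →L[ℝ] ℝ), ∀ ε > 0, ∃ a ∈ A k, ∀ φ ∈ Φ, |φ a - φ u| < ε) :
    ∃ a : ℕ → E, (∀ k, a k ∈ A k) ∧ ∀ φ : E →L[ℝ] ℝ, Tendsto (fun k => φ (a k)) atTop (𝓝 (φ u)) := by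
  classical
  choose nf hnf using fun S : Finset E => aux_norming S
  choose pick hpick1 hpick2 using fun (k : ℕ) (Φ : Finset (E →L[ℝ] ℝ)) =>
    hu k Φ (1 / ((k:ℝ) + 1)) (by positivity)
  -- state: points so far, functionals so far
  let st : ℕ → Finset E × Finset (E →L[ℝ] ℝ) := fun k => Nat.rec ({u}, nf {u})
    (fun k s => (insert (pick k s.2) s.1, s.2 ∪ nf (insert (pick k s.2) s.1))) k
  let a : ℕ → E := fun k => pick k (st k).2
  have hst1 : ∀ k, (st (k+1)).1 = insert (a k) (st k).1 := fun k => rfl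
  have hst2 : ∀ k, (st (k+1)).2 = (st k).2 ∪ nf (st (k+1)).1 := fun k => rfl
  have hnfsub : ∀ k, nf (st k).1 ⊆ (st k).2 := by
    intro k
    cases k with
    | zero => exact subset_rfl
    | succ k => rw [hst2]; exact Finset.subset_union_right
  have hm1 : Monotone fun k => (st k).1 := monotone_nat_of_le_succ fun k => by
    simp only [hst1]; exact Finset.subset_insert _ _
  have hm2 : Monotone fun k => (st k).2 := monotone_nat_of_le_succ fun k => by
    simp only [hst2]; exact Finset.subset_union_left
  have hain : ∀ k, a k ∈ (st (k+1)).1 := fun k => by rw [hst1]; exact Finset.mem_insert_self _ _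
  have huin : ∀ k, u ∈ (st k).1 := fun k => hm1 (Nat.zero_le k) (by simp [st])
  have hclose : ∀ k, ∀ φ ∈ (st k).2, |φ (a k) - φ u| < 1 / ((k:ℝ) + 1) := fun k φ hφ =>
    hpick2 k (st k).2 φ hφ
  have hlim : ∀ k, ∀ φ ∈ (st k).2, Tendsto (fun m => φ (a m)) atTop (𝓝 (φ u)) := by
    intro k φ hφ
    rw [tendsto_iff_dist_tendsto_zero]
    refine squeeze_zero' (Eventually.of_forall fun _ => dist_nonneg) ?_
      (tendsto_one_div_add_atTop_nhds_zero_nat (𝕜 := ℝ))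
    filter_upwards [eventually_ge_atTop k] with m hm
    rw [Real.dist_eq]
    exact (hclose m φ (hm2 hm hφ)).le
  refine ⟨a, fun k => hpick1 k _, fun φ => ?_⟩
  rw [tendsto_iff_ultrafilter]
  intro U hU
  obtain ⟨z, hz⟩ := hE (U.map a) C (by
    rw [Ultrafilter.coe_map, Filter.eventually_map]
    exact Eventually.of_forall fun k => hA k _ (hpick1 k _))
  have hz' : ∀ ψ : E →L[ℝ] ℝ, Tendsto (fun k => ψ (a k)) U (𝓝 (ψ z)) := by
    intro ψ
    have := hz ψ
    rwa [Ultrafilter.coe_map, tendsto_map'_iff] at this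
  -- the increasing union of spans
  let W : Submodule ℝ E := ⨆ k, Submodule.span ℝ ((st k).1 : Set E)
  have hdir : Directed (· ≤ ·) fun k => Submodule.span ℝ ((st k).1 : Set E) :=
    Monotone.directed_le fun i j hij => Submodule.span_mono (by exact_mod_cast hm1 hij)
  have haW : ∀ k, a k ∈ W := fun k =>
    Submodule.mem_iSup_of_mem (k+1) (Submodule.subset_span (hain k))
  have huW : u ∈ W := Submodule.mem_iSup_of_mem 0 (Submodule.subset_span (huin 0))
  have hzW : z ∈ W.topologicalClosure := by
    by_contra hnot
    obtain ⟨ψ, s, h1, h2⟩ := geometric_hahn_banach_closed_point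
      (W.topologicalClosure.convex) W.isClosed_topologicalClosure hnot
    have hzero : ∀ w ∈ W.topologicalClosure, ψ w = 0 := by
      intro w hw
      by_contra hne
      have := h1 (((|s| + 1) / ψ w) • w) (W.topologicalClosure.smul_mem _ hw)
      rw [map_smul, smul_eq_mul, div_mul_cancel₀ _ hne] at this
      linarith [le_abs_self s]
    have h3 : ψ z = 0 := by
      refine tendsto_nhds_unique (hz' ψ) ?_
      simp only [hzero _ (W.le_topologicalClosure (haW _))]
      exact tendsto_const_nhds
    have h4 := h1 0 (W.topologicalClosure.zero_mem)
    rw [map_zero] at h4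
    linarith
  have hzu : z = u := by
    have hd : z - u ∈ W.topologicalClosure :=
      W.topologicalClosure.sub_mem hzW (W.le_topologicalClosure huW)
    by_contra hne
    have hn : 0 < ‖z - u‖ := norm_pos_iff.2 (sub_ne_zero.2 hne)
    obtain ⟨w, hw, hwd⟩ := Metric.mem_closure_iff.1
      (show z - u ∈ closure (W : Set E) from hd) (‖z - u‖ / 4) (by positivity)
    obtain ⟨k, hk⟩ := (Submodule.mem_iSup_of_directed _ hdir).1 hw
    obtain ⟨φ', hφ', hφ1, hφ2⟩ := hnf _ w hk
    have h5 : φ' z = φ' u := tendsto_nhds_unique (hz' φ') ((hlim k φ' (hnfsub k hφ')).mono_left hU)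
    rw [dist_eq_norm] at hwd
    have h6 : |φ' w| ≤ ‖z - u - w‖ := by
      have : φ' w = - φ' (z - u - w) := by simp [h5]
      rw [this, abs_neg]
      exact (φ'.le_opNorm _).trans (by nlinarith [norm_nonneg (z - u - w)])
    have h7 : ‖z - u‖ ≤ ‖z - u - w‖ + ‖w‖ := by
      simpa using norm_add_le (z - u - w) w
    linarith
  rw [← hzu]
  exact hz' φ

theorem aux_bdd {X : Type*} [NormedAddCommGroup X] [NormedSpace ℝ X]
    (V : X → X →L[ℝ] ℝ) (hbdd : BoundedOperator V) (C : ℝ) :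
    ∃ C', ∀ u, ‖u‖ ≤ C → ‖V u‖ ≤ C' := by
  obtain ⟨C', hC'⟩ := (hbdd (Metric.closedBall 0 C) Metric.isBounded_closedBall).exists_norm_le
  exact ⟨C', fun u hu => hC' _ ⟨u, by simpa using hu, rfl⟩⟩

theorem aux_extract {X : Type*} [NormedAddCommGroup X] [NormedSpace ℝ X]
    (hrefl : Function.Surjective (NormedSpace.inclusionInDoubleDual ℝ X))
    (V : X → X →L[ℝ] ℝ) (hbdd : BoundedOperator V)
    {ι : Type*} (U : Ultrafilter ι) (u : ι → X) (C : ℝ) (hC : ∀ i, ‖u i‖ ≤ C) :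
    ∃ (x : X) (g : X →L[ℝ] ℝ),
      (∀ φ : X →L[ℝ] ℝ, Tendsto (fun i => φ (u i)) U (𝓝 (φ x))) ∧
      (∀ w, Tendsto (fun i => V (u i) w) U (𝓝 (g w))) ∧
      ∀ A : ℕ → Set ι, (∀ k, A k ∈ U) → ∃ i : ℕ → ι, (∀ k, i k ∈ A k) ∧
        WeakConvergent (fun k => u (i k)) x ∧ WeakConvergentDual (fun k => V (u (i k))) g := by
  obtain ⟨C', hC'⟩ := aux_bdd V hbdd C
  let p : ι → X × (X →L[ℝ] ℝ) := fun i => (u i, V (u i))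
  have hp : ∀ i, ‖p i‖ ≤ max C C' := fun i =>
    max_le_max (hC i) (hC' _ (hC i))
  have hWC := aux_wc_prod hrefl
  obtain ⟨⟨x, g⟩, hz⟩ := hWC (U.map p) (max C C') (by
    rw [Ultrafilter.coe_map, Filter.eventually_map]
    exact Eventually.of_forall hp)
  have hz' : ∀ φ : X × (X →L[ℝ] ℝ) →L[ℝ] ℝ, Tendsto (fun i => φ (p i)) U (𝓝 (φ (x, g))) := by
    intro φ
    have := hz φ
    rwa [Ultrafilter.coe_map, tendsto_map'_iff] at this
  let ev : X → (X × (X →L[ℝ] ℝ) →L[ℝ] ℝ) := fun w =>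
    (NormedSpace.inclusionInDoubleDual ℝ X w).comp (ContinuousLinearMap.snd ℝ X (X →L[ℝ] ℝ))
  let fs : (X →L[ℝ] ℝ) → (X × (X →L[ℝ] ℝ) →L[ℝ] ℝ) := fun φ =>
    φ.comp (ContinuousLinearMap.fst ℝ X (X →L[ℝ] ℝ))
  refine ⟨x, g, fun φ => hz' (fs φ), fun w => hz' (ev w), fun A hA => ?_⟩
  obtain ⟨a, ha, hlim⟩ := aux_kaplansky hWC (max C C') (fun k => p '' A k)
    (by rintro k _ ⟨i, -, rfl⟩; exact hp i) (x, g) (by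
      intro k Φ ε hε
      have h1 : ∀ᶠ i in (U : Filter ι), ∀ φ ∈ Φ, |φ (p i) - φ (x, g)| < ε := by
        rw [Filter.eventually_all_finset]
        intro φ _
        exact Metric.tendsto_nhds.1 (hz' φ) ε hε
      obtain ⟨i, hi1, hi2⟩ := (h1.and (hA k)).exists
      exact ⟨p i, ⟨i, hi2, rfl⟩, hi1⟩)
  choose i hi hia using ha
  refine ⟨i, hi, fun φ => ?_, fun w => ?_⟩
  · have := hlim (fs φ)
    simp_rw [← hia] at this
    exact this
  · have := hlim (ev w)
    simp_rw [← hia] at this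
    exact this

theorem aux_demicont {X : Type*} [NormedAddCommGroup X] [NormedSpace ℝ X]
    (hrefl : Function.Surjective (NormedSpace.inclusionInDoubleDual ℝ X))
    (V : X → X →L[ℝ] ℝ) (hbdd : BoundedOperator V) (hpm : Pseudomonotone V) (w : X) :
    Continuous fun u => V u w := by
  rw [continuous_iff_seqContinuous]
  intro u x hux
  rw [tendsto_iff_ultrafilter]
  intro U hU
  obtain ⟨C, hC⟩ := (Metric.isBounded_range_of_tendsto u hux).exists_norm_le
  have hC' : ∀ n, ‖u n‖ ≤ C := fun n => hC _ ⟨n, rfl⟩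
  obtain ⟨C', hVC⟩ := aux_bdd V hbdd C
  obtain ⟨y, g, -, hg, hext⟩ := aux_extract hrefl V hbdd U u C hC'
  obtain ⟨i, hi, hw, hd⟩ := hext (fun k => {n | k ≤ n}) (fun k => hU (mem_atTop k))
  have hit : Tendsto i atTop atTop := tendsto_atTop_mono hi tendsto_id
  have hux' := hux.comp hit
  have hwx : WeakConvergent (fun k => u (i k)) x := fun φ =>
    (φ.continuous.tendsto x).comp hux'
  have h0 : Tendsto (fun k => V (u (i k)) (u (i k) - x)) atTop (𝓝 0) := by
    have h1 : Tendsto (fun k => C' * ‖u (i k) - x‖) atTop (𝓝 (C' * 0)) :=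
      (tendsto_iff_norm_sub_tendsto_zero.1 hux').const_mul C'
    rw [mul_zero] at h1
    refine squeeze_zero_norm (fun k => ?_) h1
    exact (ContinuousLinearMap.le_opNorm _ _).trans
      (mul_le_mul_of_nonneg_right (hVC _ (hC' _)) (norm_nonneg _))
  have := (hpm _ x g hwx hd h0.limsup_eq.le).1
  show Tendsto (fun n => V (u n) w) U (𝓝 (V x w))
  rw [← this]
  exact hg w

/-- **Surjectivity of pseudomonotone strongly coercive operators.**
If `X` is a real reflexive Banach space and `V : X → X*` is everywhere defined,
bounded, pseudomonotone and strongly coercive, then `V` is surjective. -/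
theorem surjective_of_pseudomonotone_of_stronglyCoercive
    {X : Type*} [NormedAddCommGroup X] [NormedSpace ℝ X] [CompleteSpace X]
    (hrefl : Function.Surjective (NormedSpace.inclusionInDoubleDual ℝ X))
    (V : X → X →L[ℝ] ℝ)
    (hbdd : BoundedOperator V)
    (hpm : Pseudomonotone V)
    (hcoer : StronglyCoercive V) :
    Function.Surjective V := by
  classical
  intro f
  obtain ⟨R, hR, hpos⟩ : ∃ R : ℝ, 0 < R ∧ ∀ u, R ≤ ‖u‖ → 0 < V u u - f u := by
    have h1 := hcoer.eventually_ge_atTop (‖f‖ + 1)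
    rw [Filter.eventually_comap, Filter.eventually_atTop] at h1
    obtain ⟨R₀, hR₀⟩ := h1
    refine ⟨max R₀ 1, by positivity, fun u hu => ?_⟩
    have hu0 : 0 < ‖u‖ := lt_of_lt_of_le one_pos ((le_max_right _ _).trans hu)
    have h2 := hR₀ ‖u‖ ((le_max_left _ _).trans hu) u rfl
    rw [le_div_iff₀ hu0] at h2
    have h3 := (le_abs_self _).trans (f.le_opNorm u)
    linarith
  have hV := aux_demicont hrefl V hbdd hpm
  have hsol : ∀ S : Finset X, ∃ u : X, ‖u‖ ≤ R ∧ V u u = f u ∧ ∀ w ∈ S, V u w = f w := by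
    intro S
    have : FiniteDimensional ℝ (Submodule.span ℝ (S : Set X)) := FiniteDimensional.span_finset ℝ S
    obtain ⟨u, hu, huR, hw⟩ := aux_galerkin V hV R hR f hpos (Submodule.span ℝ (S : Set X))
    exact ⟨u, huR, hw u hu, fun w hwS => hw w (Submodule.subset_span hwS)⟩
  choose u huR huu huw using hsol
  let U : Ultrafilter (Finset X) := Ultrafilter.of atTop
  have hU : (U : Filter (Finset X)) ≤ atTop := Ultrafilter.of_le _
  obtain ⟨x, g, -, -, hext⟩ := aux_extract hrefl V hbdd U u R huR
  refine ⟨x, ?_⟩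
  ext w
  obtain ⟨i, hi, hw, hd⟩ := hext (fun _ => {S | {x, w} ≤ S}) (fun k => hU (mem_atTop _))
  have hx : ∀ k, x ∈ i k := fun k => hi k (by simp)
  have hwi : ∀ k, w ∈ i k := fun k => hi k (by simp)
  have h0 : Tendsto (fun k => V (u (i k)) (u (i k) - x)) atTop (𝓝 0) := by
    have h1 : ∀ k, V (u (i k)) (u (i k) - x) = f (u (i k)) - f x := fun k => by
      rw [map_sub, huu, huw _ x (hx k)]
    simp_rw [h1]
    simpa using (hw f).sub_const (f x)
  have hgV := (hpm _ x g hw hd h0.limsup_eq.le).1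
  rw [← hgV]
  refine tendsto_nhds_unique (hd w) ?_
  simp only [huw _ w (hwi _)]
  exact tendsto_const_nhds
end

section
/- (Pointwise nonlinear Picone inequality of Allegretto–Huang.) Let p > 1 be a real number, N ≥ 1 an integer, a, b ∈ ℝ^N vectors, and s, t real numbers with s ≥ 0 and t > 0. Then ‖a‖^p + (p − 1)·(s/t)^p·‖b‖^p − p·(s/t)^{p−1}·‖b‖^{p−2}·⟨b, a⟩ ≥ 0, where ⟨·,·⟩ is the Euclidean inner product on ℝ^N and the term ‖b‖^{p−2}·⟨b, a⟩ is interpreted as 0 when b = 0. Equivalently, if u, v are differentiable nonnegative (resp. positive) functions, this expresses the nonnegativity of the Picone integrand R(u,v) = |Du|^p − |Dv|^{p−2}(Dv, D(u^p / v^{p−1})) at each point. -/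
open RealInnerProductSpace

/-- **Pointwise nonlinear Picone inequality (Allegretto–Huang).**
For `p > 1`, vectors `a b : ℝ^N`, and reals `s ≥ 0`, `t > 0`,
`‖a‖^p + (p-1) (s/t)^p ‖b‖^p - p (s/t)^(p-1) ‖b‖^(p-2) ⟨b, a⟩ ≥ 0`.
(The term `‖b‖^(p-2) ⟨b, a⟩` vanishes automatically when `b = 0`, since then
`⟨b, a⟩ = 0`; all powers are real powers.) -/
theorem picone_pointwise_inequality
    {N : ℕ} (hN : 1 ≤ N) {p : ℝ} (hp : 1 < p)
    (a b : EuclideanSpace ℝ (Fin N)) (s t : ℝ) (hs : 0 ≤ s) (ht : 0 < t) :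
    0 ≤ ‖a‖ ^ p + (p - 1) * (s / t) ^ p * ‖b‖ ^ p
        - p * (s / t) ^ (p - 1) * (‖b‖ ^ (p - 2) * ⟪b, a⟫) := by
  have hr : 0 ≤ s / t := div_nonneg hs ht.le
  generalize s / t = r at hr
  have hp1 : 0 < p - 1 := by linarith
  have h1 : ‖b‖ ^ (p - 2) * ⟪b, a⟫ ≤ ‖b‖ ^ (p - 1) * ‖a‖ := by
    by_cases hb : b = 0
    · subst hb
      rw [inner_zero_left, mul_zero]
      positivity
    · have hb' : 0 < ‖b‖ := norm_pos_iff.mpr hb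
      have e : ‖b‖ ^ (p - 1) = ‖b‖ ^ (p - 2) * ‖b‖ := by
        rw [← Real.rpow_add_one hb'.ne']
        congr 1
        ring
      rw [e, mul_assoc]
      exact mul_le_mul_of_nonneg_left (real_inner_le_norm b a) (by positivity)
  have hy := Real.young_inequality_of_nonneg (norm_nonneg a)
    (show 0 ≤ (r * ‖b‖) ^ (p - 1) by positivity) (Real.HolderConjugate.conjExponent hp)
  have e2 : ((r * ‖b‖) ^ (p - 1)) ^ (Real.conjExponent p) = r ^ p * ‖b‖ ^ p := by
    rw [← Real.rpow_mul (by positivity), ← Real.mul_rpow hr (norm_nonneg b)]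
    congr 1
    unfold Real.conjExponent
    field_simp
  rw [e2, Real.mul_rpow hr (norm_nonneg b)] at hy
  have h2 := mul_le_mul_of_nonneg_left hy (show 0 ≤ p by linarith)
  have e3 : p * (‖a‖ ^ p / p + r ^ p * ‖b‖ ^ p / Real.conjExponent p)
      = ‖a‖ ^ p + (p - 1) * r ^ p * ‖b‖ ^ p := by
    unfold Real.conjExponent
    have : p ≠ 0 := by linarith
    field_simp
  have h3 := mul_le_mul_of_nonneg_left h1 (show 0 ≤ p * r ^ (p - 1) by positivity)
  rw [e3] at h2
  linarith
end

section
/- Let (Ω, μ) be a measure space, p > 1, N ≥ 1, and let f : Ω × ℝ × ℝ^N → ℝ. Assume there exist essentially bounded measurable functions a, ϑ : Ω → ℝ with a ≥ 0 μ-a.e. such that: (i) for μ-a.e. z ∈ Ω, all x ≥ 0 and all y ∈ ℝ^N, |f(z, x, y)| ≤ a(z)(1 + x^{p−1} + ‖y‖^{p−1}); and (ii) for every ε > 0 there exists M₁ = M₁(ε) > 0 such that for μ-a.e. z ∈ Ω, all x ≥ M₁ and all y ∈ ℝ^N, f(z, x, y) ≤ (ϑ(z) + ε)·x^{p−1}.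 Then for every ε > 0 there exists a constant c₆ > 0 such that for μ-a.e. z ∈ Ω, all x ≥ 0 and all y ∈ ℝ^N, f(z, x, y)·x ≤ (ϑ(z) + ε)·x^p + c₆·‖y‖^{p−1} + c₆. -/
open MeasureTheory

/-- **One-sided growth estimate from the asymptotic condition.**
Let `(Ω, μ)` be a measure space, `p > 1`, and `f : Ω × ℝ × ℝ^N → ℝ`. Suppose
`a, ϑ ∈ L^∞(Ω)` with `a ≥ 0` a.e. are such that
(i) `|f(z,x,y)| ≤ a(z)(1 + x^(p-1) + ‖y‖^(p-1))` for a.e. `z`, all `x ≥ 0`, all `y`; and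
(ii) for every `ε > 0` there is `M₁ > 0` with `f(z,x,y) ≤ (ϑ(z)+ε) x^(p-1)` for a.e. `z`,
all `x ≥ M₁` and all `y`.
Then for every `ε > 0` there is `c₆ > 0` such that for a.e. `z`, all `x ≥ 0` and all `y`,
`f(z,x,y)·x ≤ (ϑ(z)+ε) x^p + c₆ ‖y‖^(p-1) + c₆`. -/
theorem growth_estimate_from_asymptotic
    {Ω : Type*} [MeasurableSpace Ω] (μ : Measure Ω)
    {N : ℕ} (hN : 1 ≤ N) {p : ℝ} (hp : 1 < p)
    (f : Ω → ℝ → EuclideanSpace ℝ (Fin N) → ℝ)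
    (a ϑ : Ω → ℝ)
    (ha_meas : Measurable a) (hϑ_meas : Measurable ϑ)
    (ha_bdd : ∃ C : ℝ, ∀ᵐ z ∂μ, |a z| ≤ C)
    (hϑ_bdd : ∃ C : ℝ, ∀ᵐ z ∂μ, |ϑ z| ≤ C)
    (ha_nonneg : ∀ᵐ z ∂μ, 0 ≤ a z)
    (hgrowth : ∀ᵐ z ∂μ, ∀ x : ℝ, 0 ≤ x → ∀ y : EuclideanSpace ℝ (Fin N),
      |f z x y| ≤ a z * (1 + x ^ (p - 1) + ‖y‖ ^ (p - 1)))
    (hasymp : ∀ ε : ℝ, 0 < ε → ∃ M₁ : ℝ, 0 < M₁ ∧ ∀ᵐ z ∂μ,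
      ∀ x : ℝ, M₁ ≤ x → ∀ y : EuclideanSpace ℝ (Fin N),
        f z x y ≤ (ϑ z + ε) * x ^ (p - 1)) :
    ∀ ε : ℝ, 0 < ε → ∃ c₆ : ℝ, 0 < c₆ ∧ ∀ᵐ z ∂μ,
      ∀ x : ℝ, 0 ≤ x → ∀ y : EuclideanSpace ℝ (Fin N),
        f z x y * x ≤ (ϑ z + ε) * x ^ p + c₆ * ‖y‖ ^ (p - 1) + c₆ := by
  intro ε hε
  obtain ⟨A, hA⟩ := ha_bdd
  obtain ⟨T, hT⟩ := hϑ_bdd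
  obtain ⟨M, hM, hMf⟩ := hasymp ε hε
  have hq : 0 ≤ M ^ (p - 1) := Real.rpow_nonneg hM.le _
  refine ⟨|A| * M * (2 + M ^ (p - 1)) + |T| * (M ^ (p - 1) * M) + 1, by positivity, ?_⟩
  filter_upwards [hA, hT, ha_nonneg, hgrowth, hMf] with z hAz hTz ha0 hg hf x hx y
  have hY : 0 ≤ ‖y‖ ^ (p - 1) := Real.rpow_nonneg (norm_nonneg _) _
  have hxp : x ^ p = x ^ (p - 1) * x := by
    rcases hx.eq_or_lt with h | h
    · subst h
      rw [Real.zero_rpow (by linarith)]; simp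
    · rw [Real.rpow_sub_one h.ne']; field_simp
  have hr : 0 ≤ x ^ (p - 1) := Real.rpow_nonneg hx _
  rw [hxp]
  have hgy := hg x hx y
  generalize ‖y‖ ^ (p - 1) = Y at *
  have hAM : 0 ≤ |A| * M := by positivity
  have hAMq : 0 ≤ |A| * M * M ^ (p - 1) := by positivity
  have hTq : 0 ≤ |T| * (M ^ (p - 1) * M) := by positivity
  have hcY : |A| * M * Y ≤
      (|A| * M * (2 + M ^ (p - 1)) + |T| * (M ^ (p - 1) * M) + 1) * Y :=
    mul_le_mul_of_nonneg_right (by nlinarith) hY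
  rcases le_or_gt M x with h | h
  · have h1 := mul_le_mul_of_nonneg_right (hf x h y) hx
    have : 0 ≤ |A| * M * Y := by positivity
    nlinarith
  · have hrq : x ^ (p - 1) ≤ M ^ (p - 1) :=
      Real.rpow_le_rpow hx h.le (by linarith)
    have haA : a z ≤ |A| := (le_abs_self _).trans (hAz.trans (le_abs_self _))
    have hTl : -|T| ≤ ϑ z + ε := by
      have := neg_abs_le (ϑ z)
      have := hTz.trans (le_abs_self T)
      linarith
    have h1 : f z x y ≤ |A| * (1 + M ^ (p - 1) + Y) := by
      refine (le_abs_self _).trans (hgy.trans ?_)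
      exact mul_le_mul haA (by linarith) (by positivity) (abs_nonneg _)
    have h2 : f z x y * x ≤ |A| * (1 + M ^ (p - 1) + Y) * M :=
      (mul_le_mul_of_nonneg_right h1 hx).trans
        (mul_le_mul_of_nonneg_left h.le (by positivity))
    have h3 : x ^ (p - 1) * x ≤ M ^ (p - 1) * M := mul_le_mul hrq h.le hx hq
    have h4 : -|T| * (x ^ (p - 1) * x) ≤ (ϑ z + ε) * (x ^ (p - 1) * x) :=
      mul_le_mul_of_nonneg_right hTl (by positivity)
    have h5 : |T| * (x ^ (p - 1) * x) ≤ |T| * (M ^ (p - 1) * M) :=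
      mul_le_mul_of_nonneg_left h3 (abs_nonneg _)
    linarith
end

section
/- Let (Ω, μ) be a measure space, p > 1, N ≥ 1, M > 0, and let f : Ω × ℝ × ℝ^N → ℝ. Assume there exist essentially bounded measurable functions a, η : Ω → ℝ with a ≥ 0 and η ≥ 0 μ-a.e. such that: (i) for μ-a.e. z ∈ Ω, all x ≥ 0 and all y ∈ ℝ^N, |f(z, x, y)| ≤ a(z)(1 + x^{p−1} + ‖y‖^{p−1}); and (ii) for every ε > 0 there exists δ = δ(ε) > 0 such that for μ-a.e. z ∈ Ω, all 0 ≤ x ≤ δ and all y with ‖y‖ ≤ M, f(z, x, y) ≥ (η(z) − ε)·x^{p−1}. Then there exists a constant ξ̂_M > 0 such that for μ-a.e. z ∈ Ω, all x ∈ [0, M] and all y ∈ ℝ^N with ‖y‖ ≤ M, f(z, x, y) + ξ̂_M·x^{p−1} ≥ 0. -/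
open MeasureTheory

/-- **Lower bound near zero from the liminf condition.**
Let `(Ω, μ)` be a measure space, `p > 1`, `M > 0`, and `f : Ω × ℝ × ℝ^N → ℝ`. Suppose
`a, η ∈ L^∞(Ω)` with `a ≥ 0` and `η ≥ 0` a.e. are such that
(i) `|f(z,x,y)| ≤ a(z)(1 + x^(p-1) + ‖y‖^(p-1))` for a.e. `z`, all `x ≥ 0`, all `y`; and
(ii) for every `ε > 0` there is `δ > 0` with `f(z,x,y) ≥ (η(z)-ε) x^(p-1)` for a.e. `z`,
all `0 ≤ x ≤ δ` and all `‖y‖ ≤ M`.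
Then there is `ξ̂_M > 0` such that for a.e. `z`, all `x ∈ [0, M]` and all `‖y‖ ≤ M`,
`f(z,x,y) + ξ̂_M x^(p-1) ≥ 0`. -/
theorem lower_bound_from_liminf_condition
    {Ω : Type*} [MeasurableSpace Ω] (μ : Measure Ω)
    {N : ℕ} (hN : 1 ≤ N) {p : ℝ} (hp : 1 < p) {M : ℝ} (hM : 0 < M)
    (f : Ω → ℝ → EuclideanSpace ℝ (Fin N) → ℝ)
    (a η : Ω → ℝ)
    (ha_meas : Measurable a) (hη_meas : Measurable η)
    (ha_bdd : ∃ C : ℝ, ∀ᵐ z ∂μ, |a z| ≤ C)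
    (hη_bdd : ∃ C : ℝ, ∀ᵐ z ∂μ, |η z| ≤ C)
    (ha_nonneg : ∀ᵐ z ∂μ, 0 ≤ a z)
    (hη_nonneg : ∀ᵐ z ∂μ, 0 ≤ η z)
    (hgrowth : ∀ᵐ z ∂μ, ∀ x : ℝ, 0 ≤ x → ∀ y : EuclideanSpace ℝ (Fin N),
      |f z x y| ≤ a z * (1 + x ^ (p - 1) + ‖y‖ ^ (p - 1)))
    (hsmall : ∀ ε : ℝ, 0 < ε → ∃ δ : ℝ, 0 < δ ∧ ∀ᵐ z ∂μ,
      ∀ x : ℝ, 0 ≤ x → x ≤ δ → ∀ y : EuclideanSpace ℝ (Fin N), ‖y‖ ≤ M →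
        (η z - ε) * x ^ (p - 1) ≤ f z x y) :
    ∃ ξ : ℝ, 0 < ξ ∧ ∀ᵐ z ∂μ,
      ∀ x : ℝ, 0 ≤ x → x ≤ M → ∀ y : EuclideanSpace ℝ (Fin N), ‖y‖ ≤ M →
        0 ≤ f z x y + ξ * x ^ (p - 1) := by
  obtain ⟨C, hC⟩ := ha_bdd
  obtain ⟨δ, hδ, hs⟩ := hsmall 1 one_pos
  have hD : 0 < δ ^ (p - 1) := Real.rpow_pos_of_pos hδ _
  have hMp : 0 < M ^ (p - 1) := Real.rpow_pos_of_pos hM _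
  have hp1 : 0 ≤ p - 1 := by linarith
  have hK : 0 ≤ |C| * (1 + M ^ (p - 1) + M ^ (p - 1)) := by positivity
  refine ⟨1 + |C| * (1 + M ^ (p - 1) + M ^ (p - 1)) / δ ^ (p - 1), by positivity, ?_⟩
  filter_upwards [hC, ha_nonneg, hη_nonneg, hgrowth, hs] with z hCz haz hηz hg hsz x hx0 hxM y hy
  have hxp : 0 ≤ x ^ (p - 1) := Real.rpow_nonneg hx0 _
  have hq : 0 ≤ |C| * (1 + M ^ (p - 1) + M ^ (p - 1)) / δ ^ (p - 1) := by positivity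
  rcases le_total x δ with h | h
  · have h1 := hsz x hx0 h y hy
    have h2 := mul_nonneg hηz hxp
    have h3 := mul_nonneg hq hxp
    linarith
  · have h1 := hg x hx0 y
    have hxM' : x ^ (p - 1) ≤ M ^ (p - 1) := Real.rpow_le_rpow hx0 hxM hp1
    have hyM' : ‖y‖ ^ (p - 1) ≤ M ^ (p - 1) := Real.rpow_le_rpow (norm_nonneg y) hy hp1
    have hyp : 0 ≤ ‖y‖ ^ (p - 1) := Real.rpow_nonneg (norm_nonneg y) _
    have hδx : δ ^ (p - 1) ≤ x ^ (p - 1) := Real.rpow_le_rpow hδ.le h hp1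
    have haC : a z ≤ |C| := (le_abs_self _).trans (hCz.trans (le_abs_self _))
    have h2 : a z * (1 + x ^ (p - 1) + ‖y‖ ^ (p - 1))
        ≤ |C| * (1 + M ^ (p - 1) + M ^ (p - 1)) :=
      mul_le_mul haC (by linarith) (by linarith) (abs_nonneg _)
    have h3 := mul_le_mul_of_nonneg_left hδx hq
    rw [div_mul_cancel₀ _ hD.ne'] at h3
    have h4 := neg_abs_le (f z x y)
    linarith
end
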